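/- Let ρ > 0 and define φ(s) = 2 sin(s)/τ(s) for s < 0 with τ(s) = 1 − ρs + (ρ/2)sin(2s), and φ(s) = 2 sin(s) for s ≥ 0. Then for every x ≥ 0, ∫_{−∞}^{x} φ(s)² ds = (2/ρ)·(1 + ρx − (ρ/2)·sin(2x)). -/

import Mathlib

open Filter Topology MeasureTheory

/-!
On the left half-line `τ' = -2ρ sin²`, so `φ² = 4 sin² / τ²` is the derivative of `(2/ρ) / τ`.
This antiderivative equals `2/ρ` at `0` and vanishes at `-∞`, because `τ(s) ≥ 1` for `s ≤ 0` and
`τ(s) → ∞` as `s → -∞`; hence `∫_{-∞}^0 φ² = 2/ρ`. The remaining part `∫_0^x 4 sin²` is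
elementary. The improper integral is computed after the reflection `s ↦ -s`, where the theorem
on nonnegative derivatives on `(0, ∞)` needs no prior integrability.
-/

/-- The tau function on the left half-line: `τ(s) = 1 - ρs + (ρ/2) sin 2s`. -/
noncomputable def tauLeft (ρ : ℝ) (s : ℝ) : ℝ :=
  1 - ρ * s + (ρ / 2) * Real.sin (2 * s)

/-- The full-reflection solution `φ`, equal to `2 sin s / τ(s)` for `s < 0`
and to `2 sin s` for `s ≥ 0`. -/
noncomputable def phiGlued (ρ : ℝ) (s : ℝ) : ℝ :=
  if s < 0 then 2 * Real.sin s / tauLeft ρ s else 2 * Real.sin s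

lemma tauLeft_neg (ρ t : ℝ) :
    tauLeft ρ (-t) = 1 + ρ * t - (ρ / 2) * Real.sin (2 * t) := by
  simp only [tauLeft, mul_neg, Real.sin_neg]
  ring

lemma tauLeft_neg_pos {ρ t : ℝ} (hρ : 0 < ρ) (ht : 0 ≤ t) : 0 < tauLeft ρ (-t) := by
  rw [tauLeft_neg]
  have h : Real.sin (2 * t) ≤ 2 * t := Real.sin_le (by linarith)
  nlinarith [mul_le_mul_of_nonneg_left h hρ.le]

lemma hasDerivAt_tauLeft_neg (ρ t : ℝ) :
    HasDerivAt (fun t => tauLeft ρ (-t)) (2 * ρ * Real.sin t ^ 2) t := by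
  simp only [tauLeft_neg]
  have h2 : HasDerivAt (fun t : ℝ => 2 * t) 2 t := by
    simpa using (hasDerivAt_id t).const_mul (2 : ℝ)
  have h3 : HasDerivAt (fun t : ℝ => ρ * t) ρ t := by
    simpa using (hasDerivAt_id t).const_mul ρ
  refine ((h3.const_add 1).sub (h2.sin.const_mul (ρ / 2))).congr_deriv ?_
  rw [Real.cos_two_mul, Real.cos_sq']
  ring

lemma tendsto_tauLeft_neg {ρ : ℝ} (hρ : 0 < ρ) :
    Tendsto (fun t => tauLeft ρ (-t)) atTop atTop := by
  have h : Tendsto (fun t : ℝ => (1 - ρ / 2) + ρ * t) atTop atTop :=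
    tendsto_atTop_add_const_left _ _ (tendsto_id.const_mul_atTop hρ)
  refine tendsto_atTop_mono (fun t => ?_) h
  rw [tauLeft_neg]
  nlinarith [Real.sin_le_one (2 * t)]

lemma integral_Ioi_sq_phiGlued_neg {ρ : ℝ} (hρ : 0 < ρ) :
    ∫ t in Set.Ioi (0 : ℝ), phiGlued ρ (-t) ^ 2 = 2 / ρ := by
  have hd : ∀ t ∈ Set.Ici (0 : ℝ), HasDerivAt (fun t => -(2 / ρ) * (tauLeft ρ (-t))⁻¹)
      (phiGlued ρ (-t) ^ 2) t := by
    intro t ht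
    have hpos := tauLeft_neg_pos hρ (Set.mem_Ici.1 ht)
    refine (((hasDerivAt_tauLeft_neg ρ t).inv hpos.ne').const_mul (-(2 / ρ))).congr_deriv ?_
    rcases (Set.mem_Ici.1 ht).eq_or_lt with rfl | h
    · simp [phiGlued]
    · rw [phiGlued, if_pos (neg_lt_zero.2 h), Real.sin_neg]
      field_simp
  have hlim : Tendsto (fun t => -(2 / ρ) * (tauLeft ρ (-t))⁻¹) atTop (𝓝 0) := by
    simpa using (tendsto_tauLeft_neg hρ).inv_tendsto_atTop.const_mul (-(2 / ρ))
  rw [integral_Ioi_of_hasDerivAt_of_nonneg' hd (fun t _ => sq_nonneg _) hlim]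
  simp [tauLeft]

lemma integral_Iic_zero_sq_phiGlued {ρ : ℝ} (hρ : 0 < ρ) :
    ∫ s in Set.Iic (0 : ℝ), phiGlued ρ s ^ 2 = 2 / ρ := by
  have h := integral_comp_neg_Ioi (0 : ℝ) (fun s => phiGlued ρ s ^ 2)
  rw [neg_zero] at h
  rw [← h, integral_Ioi_sq_phiGlued_neg hρ]

/-- For every `x ≥ 0`,
`∫_{-∞}^x φ(s)² ds = (2/ρ)(1 + ρx - (ρ/2) sin 2x)`. -/
theorem integral_sq_phiGlued (ρ : ℝ) (hρ : 0 < ρ) :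
    ∀ x : ℝ, 0 ≤ x →
      (∫ s in Set.Iic x, (phiGlued ρ s)^2)
        = (2 / ρ) * (1 + ρ * x - (ρ / 2) * Real.sin (2 * x)) := by
  intro x hx
  have hL := integral_Iic_zero_sq_phiGlued hρ
  -- A nonzero Bochner integral forces integrability.
  have hLi : IntegrableOn (fun s => phiGlued ρ s ^ 2) (Set.Iic 0) :=
    Integrable.of_integral_ne_zero (by rw [hL]; positivity)
  have hEq : Set.EqOn (fun s => phiGlued ρ s ^ 2) (fun s => 4 * Real.sin s ^ 2) (Set.Ioc 0 x) := by
    intro s hs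
    simp only [phiGlued, if_neg (not_lt.2 hs.1.le)]
    ring
  have hRi : IntegrableOn (fun s => phiGlued ρ s ^ 2) (Set.Ioc 0 x) := by
    refine IntegrableOn.congr_fun ?_ hEq.symm measurableSet_Ioc
    exact (Continuous.integrableOn_Icc (by fun_prop)).mono_set Set.Ioc_subset_Icc_self
  rw [← Set.Iic_union_Ioc_eq_Iic hx,
    setIntegral_union (Set.Iic_disjoint_Ioc le_rfl) measurableSet_Ioc hLi hRi, hL,
    setIntegral_congr_fun measurableSet_Ioc hEq, ← intervalIntegral.integral_of_le hx,
    intervalIntegral.integral_const_mul, integral_sin_sq, Real.sin_two_mul]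
  simp only [Real.sin_zero]
  field_simp
  ring
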